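/- Let L ⊆ ℂᴺ be compact, B ⊆ ℂⁿ a closed ball centred at 0, and S ⊆ ℂ^{N+n} compact with (L × B) ∪ S polynomially convex and S ∩ (L × B) = ∅. Then for every t ∈ [1, ∞), with θ_t(z,ζ) = (z, tζ), the set (L × B) ∪ θ_t(S) is polynomially convex and θ_t(S) ∩ (L × B) = ∅, provided S ∩ (L × tB) = ∅. -/

import Mathlib

noncomputable section
open Set Metric MvPolynomial

/-- The polynomially convex hull of a set in `ℂⁿ`. -/
def polyHull {n : ℕ} (K : Set (EuclideanSpace ℂ (Fin n))) : Set (EuclideanSpace ℂ (Fin n)) :=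
  {z | ∀ p : MvPolynomial (Fin n) ℂ,
    ‖eval (fun i => z i) p‖ ≤ sSup ((fun w => ‖eval (fun i => w i) p‖) '' K)}

/-- A compact set in `ℂⁿ` is polynomially convex if it equals its polynomial hull. -/
def IsPolyConvex {n : ℕ} (K : Set (EuclideanSpace ℂ (Fin n))) : Prop :=
  polyHull K = K

/-- Polynomial hull for subsets of a product `ℂᴺ × ℂⁿ ≅ ℂ^{N+n}`, using polynomials in the
`N + n` coordinates. -/
def polyHull2 {N n : ℕ} (S : Set (EuclideanSpace ℂ (Fin N) × EuclideanSpace ℂ (Fin n))) :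
    Set (EuclideanSpace ℂ (Fin N) × EuclideanSpace ℂ (Fin n)) :=
  {z | ∀ p : MvPolynomial (Fin N ⊕ Fin n) ℂ,
    ‖eval (Sum.elim (fun i => z.1 i) (fun j => z.2 j)) p‖ ≤
      sSup ((fun w => ‖eval (Sum.elim (fun i => w.1 i) (fun j => w.2 j)) p‖) '' S)}

def IsPolyConvex2 {N n : ℕ} (S : Set (EuclideanSpace ℂ (Fin N) × EuclideanSpace ℂ (Fin n))) :
    Prop :=
  polyHull2 S = S

/-!
The map `θ_t` is linear and invertible, so `(L × tB) ∪ θ_t S` is polynomially convex, with disjoint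
pieces. Disjoint compact pieces `K₀`, `K₁` of a polynomially convex union are separated by
polynomials close to `0` on `K₀` and close to `1` on `K₁`. Multiplying polynomials by such a
separating factor shows that, for `K' ⊆ K₁`, the hull of `K₀ ∪ K'` meets `K₁` only in the hull
of `K'`. For `K' = L × B` inside `K₁ = L × tB`, that part of the hull lies in `L × B`, because the
linear forms `⟪ζ, ·⟫` detect the ball.

The separating polynomial is the Shilov idempotent of the algebra `P(K)` of uniform limits of
polynomials on `K = K₀ ∪ K₁`, obtained one coordinate at a time. If idempotents exist on the fibres
of a coordinate `a ∈ P(K)`, they patch together to a smooth compactly supported `e : ℂ → P(K)` with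
`e² - e = (w - a) q`. Then `∂̄e = (w - a) k` for some `k`, and by the Cauchy–Pompeiu formula the
element `-π⁻¹ ∫ k` takes the value `φ (e (φ a))` at every character `φ`.
-/

section Idempotents

open WeakDual Filter Topology

theorem catalan_le_four_pow (n : ℕ) : catalan n ≤ 4 ^ n := by
  rw [catalan_eq_centralBinom_div]
  exact (Nat.div_le_self _ _).trans (Nat.centralBinom_le_four_pow n)

theorem summable_norm_catalan_smul_pow {A : Type*} [NormedRing A] [NormedAlgebra ℂ A]
    [CompleteSpace A] {x : A} (hx : spectralRadius ℂ x < ENNReal.ofReal (1 / 4)) :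
    Summable fun n : ℕ => ‖(catalan n : ℂ) • x ^ n‖ := by
  obtain ⟨ρ, hxρ, hρ⟩ := ENNReal.lt_iff_exists_nnreal_btwn.1 hx
  have hρ' : 4 * (ρ : ℝ) < 1 := by
    have h : (ρ : ℝ) < 1 / 4 := by
      rwa [← ENNReal.ofReal_coe_nnreal, ENNReal.ofReal_lt_ofReal_iff (by norm_num)] at hρ
    linarith
  refine (summable_geometric_of_lt_one (by positivity) hρ').of_norm_bounded_eventually_nat ?_
  filter_upwards [(spectrum.pow_norm_pow_one_div_tendsto_nhds_spectralRadius x).eventually_lt_const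
    hxρ, eventually_gt_atTop 0] with n hn hpos
  rw [← ENNReal.ofReal_coe_nnreal, ENNReal.ofReal_lt_ofReal_iff'] at hn
  have hpow : ‖x ^ n‖ ≤ (ρ : ℝ) ^ n := by
    rw [← Real.rpow_inv_natCast_pow (norm_nonneg (x ^ n)) hpos.ne', ← one_div]
    exact pow_le_pow_left₀ (by positivity) hn.1.le n
  have hcat : (catalan n : ℝ) ≤ 4 ^ n := mod_cast catalan_le_four_pow n
  rw [norm_norm, norm_smul, Complex.norm_natCast, mul_pow]
  gcongr

theorem tsum_catalan_smul_pow_eq {A : Type*} [NormedRing A] [NormedAlgebra ℂ A]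
    [CompleteSpace A] {x : A} (hs : Summable fun n : ℕ => ‖(catalan n : ℂ) • x ^ n‖) :
    ∑' n : ℕ, (catalan n : ℂ) • x ^ n = 1 + x * (∑' n : ℕ, (catalan n : ℂ) • x ^ n) ^ 2 := by
  rw [sq, tsum_mul_tsum_eq_tsum_sum_antidiagonal_of_summable_norm hs hs,
    ← (summable_norm_sum_mul_antidiagonal_of_summable_norm hs hs).of_norm.tsum_mul_left,
    hs.of_norm.tsum_eq_zero_add, catalan_zero, Nat.cast_one, one_smul, pow_zero]
  congr 1
  refine tsum_congr fun n => ?_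
  simp only [catalan_succ', Nat.cast_sum, Nat.cast_mul, Finset.sum_smul, Finset.mul_sum]
  refine Finset.sum_congr rfl fun ij hij => ?_
  rw [Finset.HasAntidiagonal.mem_antidiagonal] at hij
  rw [smul_mul_smul_comm, ← pow_add, hij, mul_smul_comm, pow_succ']

/-- The Newton-type correction of an approximate idempotent `f`: it solves `e ^ 2 = e` when
`y - y ^ 2 = f - f ^ 2` and `1 - 2 * y` is a unit. -/
def idempotentCorrection {R : Type*} [CommRing R] (f y : R) : R :=
  (f - y) * Ring.inverse (1 - 2 * y)

theorem idempotentCorrection_sq_sub_self {R : Type*} [CommRing R] (f : R) {y : R}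
    (hy : IsUnit (1 - 2 * y)) :
    idempotentCorrection f y ^ 2 - idempotentCorrection f y =
      (f ^ 2 - f + (y - y ^ 2)) * Ring.inverse (1 - 2 * y) ^ 2 := by
  have h := Ring.mul_inverse_cancel _ hy
  rw [idempotentCorrection]
  linear_combination (f - y) * Ring.inverse (1 - 2 * y) * h

theorem norm_idempotentCorrection_sub_lt_one {f y v : ℂ} (hv : v = 0 ∨ v = 1)
    (hf : ‖f - v‖ ≤ 1 / 10) (hy : ‖y‖ ≤ 1 / 4) : ‖idempotentCorrection f y - v‖ < 1 := by
  have hden : 1 / 2 ≤ ‖1 - 2 * y‖ := by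
    have h := norm_sub_norm_le (1 : ℂ) (2 * y)
    rw [norm_mul, norm_one, Complex.norm_two] at h
    linarith
  have hne : 1 - 2 * y ≠ 0 := norm_pos_iff.1 (by linarith)
  have heq : idempotentCorrection f y - v = ((f - v) - (1 - 2 * v) * y) / (1 - 2 * y) := by
    rw [idempotentCorrection, Ring.inverse_eq_inv', eq_div_iff hne, sub_mul, mul_assoc,
      inv_mul_cancel₀ hne]
    ring
  have hs : ‖1 - 2 * v‖ = 1 := by rcases hv with rfl | rfl <;> norm_num
  rw [heq, norm_div, div_lt_one (by linarith)]
  refine (norm_sub_le _ _).trans_lt ?_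
  rw [norm_mul, hs]
  linarith

theorem eq_of_sq_eq_self_of_norm_sub_lt_one {z v : ℂ} (hz : z ^ 2 = z) (hv : v = 0 ∨ v = 1)
    (h : ‖z - v‖ < 1) : z = v := by
  have hz' : z = 0 ∨ z = 1 := by
    rwa [← IsIdempotentElem.iff_eq_zero_or_one, IsIdempotentElem, ← sq]
  rcases hz' with rfl | rfl <;> rcases hv with rfl | rfl <;> simp at h ⊢

theorem map_idempotentCorrection_eq {R F : Type*} [CommRing R] [FunLike F R ℂ]
    [RingHomClass F R ℂ] (φ : F) {f y : R} {v : ℂ} (hu : IsUnit (1 - 2 * y))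
    (hv : v = 0 ∨ v = 1) (hf : ‖φ f - v‖ ≤ 1 / 10) (hy : ‖φ y‖ ≤ 1 / 4)
    (he : φ (idempotentCorrection f y ^ 2 - idempotentCorrection f y) = 0) :
    φ (idempotentCorrection f y) = v := by
  have hφ : φ (idempotentCorrection f y) = idempotentCorrection (φ f) (φ y) := by
    have hinv := congrArg φ (Ring.mul_inverse_cancel _ hu)
    rw [map_mul, map_sub, map_mul, map_one, map_ofNat] at hinv
    rw [idempotentCorrection, idempotentCorrection, map_mul, map_sub, Ring.inverse_eq_inv',
      eq_inv_of_mul_eq_one_right hinv]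
  rw [map_sub, map_pow, sub_eq_zero] at he
  exact eq_of_sq_eq_self_of_norm_sub_lt_one he hv
    (hφ ▸ norm_idempotentCorrection_sub_lt_one hv hf hy)

theorem norm_sub_sq_le_of_norm_sub_le {z v : ℂ} (hv : v = 0 ∨ v = 1) (h : ‖z - v‖ ≤ 1 / 10) :
    ‖z - z ^ 2‖ ≤ 1 / 8 := by
  have hs : ‖1 - 2 * v‖ = 1 := by rcases hv with rfl | rfl <;> norm_num
  have heq : z - z ^ 2 = (1 - 2 * v) * (z - v) - (z - v) ^ 2 := by
    rcases hv with rfl | rfl <;> ring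
  rw [heq]
  refine (norm_sub_le _ _).trans ?_
  rw [norm_mul, hs, norm_pow]
  nlinarith [norm_nonneg (z - v)]

variable {A : Type*} [NormedCommRing A] [NormedAlgebra ℂ A] [CompleteSpace A]

/-- The solution is the power series of `(1 - √(1 - 4 * x)) / 2`, with Catalan coefficients. -/
theorem exists_sub_sq_eq_of_norm_character_le {x : A}
    (hx : ∀ φ : characterSpace ℂ A, ‖φ x‖ ≤ 1 / 8) :
    ∃ y : A, y - y ^ 2 = x ∧ ∀ φ : characterSpace ℂ A, ‖φ y‖ ≤ 1 / 4 := by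
  have hrad : spectralRadius ℂ x < ENNReal.ofReal (1 / 4) := by
    refine (iSup₂_le fun k hk => ?_).trans_lt
      ((ENNReal.ofReal_lt_ofReal_iff (by norm_num)).2 (by norm_num : (1 / 8 : ℝ) < 1 / 4))
    obtain ⟨φ, rfl⟩ := CharacterSpace.mem_spectrum_iff_exists.1 hk
    rw [← enorm_eq_nnnorm, ← ofReal_norm]
    exact ENNReal.ofReal_le_ofReal (hx φ)
  have hs := summable_norm_catalan_smul_pow hrad
  refine ⟨x * ∑' n : ℕ, (catalan n : ℂ) • x ^ n, ?_, fun φ => ?_⟩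
  · linear_combination x * tsum_catalan_smul_pow_eq hs
  have hbound : ‖∑' n : ℕ, φ ((catalan n : ℂ) • x ^ n)‖ ≤ 2 := by
    refine tsum_of_norm_bounded (g := fun n => (1 / 2 : ℝ) ^ n) hasSum_geometric_two fun n => ?_
    have hcat : (catalan n : ℝ) ≤ 4 ^ n := mod_cast catalan_le_four_pow n
    simp only [map_smul, map_pow, norm_smul, norm_pow, Complex.norm_natCast]
    calc (catalan n : ℝ) * ‖φ x‖ ^ n ≤ 4 ^ n * (1 / 8 : ℝ) ^ n := by gcongr; exact hx φ
      _ = (1 / 2) ^ n := by rw [← mul_pow]; norm_num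
  have hφ : φ (∑' n : ℕ, (catalan n : ℂ) • x ^ n) = ∑' n : ℕ, φ ((catalan n : ℂ) • x ^ n) :=
    (CharacterSpace.toCLM φ).map_tsum hs.of_norm
  rw [map_mul, hφ, norm_mul]
  calc _ ≤ (1 / 8 : ℝ) * 2 := by gcongr; exact hx φ
    _ = 1 / 4 := by norm_num

theorem isUnit_of_forall_character_ne_zero {x : A} (hx : ∀ φ : characterSpace ℂ A, φ x ≠ 0) :
    IsUnit x := by
  by_contra h
  obtain ⟨φ, hφ⟩ := CharacterSpace.exists_apply_eq_zero h
  exact hx φ hφ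

theorem isUnit_one_sub_two_mul_of_norm_character_le {y : A}
    (hy : ∀ φ : characterSpace ℂ A, ‖φ y‖ ≤ 1 / 4) : IsUnit (1 - 2 * y) := by
  refine isUnit_of_forall_character_ne_zero fun φ h => ?_
  rw [map_sub, map_one, map_mul, map_ofNat] at h
  have hφ := hy φ
  rw [show φ y = 1 / 2 by linear_combination -h / 2] at hφ
  norm_num at hφ

theorem exists_idempotent_of_character_near {f : A} {v : characterSpace ℂ A → ℂ}
    (hv : ∀ φ, v φ = 0 ∨ v φ = 1) (hf : ∀ φ : characterSpace ℂ A, ‖φ f - v φ‖ ≤ 1 / 10) :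
    ∃ e : A, e ^ 2 = e ∧ ∀ φ : characterSpace ℂ A, φ e = v φ := by
  obtain ⟨y, hy, hyφ⟩ := exists_sub_sq_eq_of_norm_character_le (x := f - f ^ 2) fun φ => by
    rw [map_sub, map_pow]
    exact norm_sub_sq_le_of_norm_sub_le (hv φ) (hf φ)
  have hu := isUnit_one_sub_two_mul_of_norm_character_le hyφ
  have he : idempotentCorrection f y ^ 2 - idempotentCorrection f y = 0 := by
    rw [idempotentCorrection_sq_sub_self f hu, hy]
    ring
  exact ⟨idempotentCorrection f y, sub_eq_zero.1 he, fun φ =>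
    map_idempotentCorrection_eq φ hu (hv φ) (hf φ) (hyφ φ) (by rw [he, map_zero])⟩

theorem exists_idempotent_mod_of_character_near {I : Ideal A} (hI : IsClosed (I : Set A)) {f : A}
    {v : characterSpace ℂ A → ℂ} (hv : ∀ φ, v φ = 0 ∨ v φ = 1)
    (hf : ∀ φ : characterSpace ℂ A, (∀ x ∈ I, φ x = 0) → ‖φ f - v φ‖ ≤ 1 / 10) :
    ∃ e : A, e ^ 2 - e ∈ I ∧ ∀ φ : characterSpace ℂ A, (∀ x ∈ I, φ x = 0) → φ e = v φ := by
  let pull (ψ : characterSpace ℂ (A ⧸ I)) : characterSpace ℂ A :=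
    CharacterSpace.equivAlgHom.symm ((CharacterSpace.equivAlgHom ψ).comp (Ideal.Quotient.mkₐ ℂ I))
  have hpull (ψ) (x : A) : pull ψ x = ψ (Ideal.Quotient.mk I x) := rfl
  have hpull_mem (ψ) (x : A) (hx : x ∈ I) : pull ψ x = 0 := by
    rw [hpull, Ideal.Quotient.eq_zero_iff_mem.2 hx, map_zero]
  obtain ⟨e', he', heψ⟩ := exists_idempotent_of_character_near (f := Ideal.Quotient.mk I f)
    (v := fun ψ => v (pull ψ)) (fun ψ => hv _) fun ψ => hf (pull ψ) (hpull_mem ψ)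
  obtain ⟨e, rfl⟩ := Ideal.Quotient.mk_surjective e'
  rw [← sub_eq_zero, ← map_pow, ← map_sub, Ideal.Quotient.eq_zero_iff_mem] at he'
  refine ⟨e, he', fun φ hφ => ?_⟩
  exact heψ (CharacterSpace.equivAlgHom.symm
    (Ideal.Quotient.liftₐ I (CharacterSpace.equivAlgHom φ) hφ))

theorem exists_contDiffAt_sub_sq_eq : ∃ G : A → A, G 0 = 0 ∧
    ∀ᶠ u in 𝓝 (0 : A), G u - G u ^ 2 = u ∧ ContDiffAt ℂ 1 G u := by
  have hF : ContDiffAt ℂ 1 (fun y : A => y - y ^ 2) 0 := by fun_prop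
  have hF' : HasFDerivAt (fun y : A => y - y ^ 2)
      ((ContinuousLinearEquiv.refl ℂ A : A ≃L[ℂ] A) : A →L[ℂ] A) 0 := by
    refine ((hasFDerivAt_id (𝕜 := ℂ) (0 : A)).sub
      ((hasFDerivAt_id (𝕜 := ℂ) (0 : A)).pow 2)).congr_fderiv ?_
    ext y
    simp
  have hF0 : (0 : A) - 0 ^ 2 = 0 := by simp
  have hG := hF.to_localInverse hF' one_ne_zero
  have hG0 := hF.localInverse_apply_image hF' one_ne_zero
  have hright := (hF.hasStrictFDerivAt' hF' one_ne_zero).eventually_right_inverse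
  rw [hF0] at hG hG0 hright
  exact ⟨_, hG0, hright.and (hG.eventually (by simp))⟩

theorem norm_character_apply_le (φ : characterSpace ℂ A) (x : A) : ‖φ x‖ ≤ ‖x‖ * ‖(1 : A)‖ :=
  AlgHom.norm_apply_le_self_mul_norm_one (CharacterSpace.toAlgHom φ) x

theorem exists_contDiffOn_sub_sq_eq : ∃ (G : A → A) (δ : ℝ), 0 < δ ∧ G 0 = 0 ∧
    ContDiffOn ℂ 1 G (ball 0 δ) ∧ ∀ u ∈ ball (0 : A) δ, G u - G u ^ 2 = u ∧
      IsUnit (1 - 2 * G u) ∧ ∀ φ : characterSpace ℂ A, ‖φ (G u)‖ ≤ 1 / 4 := by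
  obtain ⟨G, hG0, hG⟩ := exists_contDiffAt_sub_sq_eq (A := A)
  have hGc : ContinuousAt G 0 := hG.self_of_nhds.2.continuousAt
  have hsmall : ∀ᶠ u in 𝓝 (0 : A), ‖G u‖ * ‖(1 : A)‖ ≤ 1 / 4 := by
    have h : ContinuousAt (fun u => ‖G u‖ * ‖(1 : A)‖) 0 := by fun_prop
    exact h.eventually (ge_mem_nhds (by simp [hG0]))
  obtain ⟨δ, hδ, hball⟩ := Metric.eventually_nhds_iff_ball.1 (hG.and hsmall)
  have hφ (u) (hu : u ∈ ball (0 : A) δ) (φ : characterSpace ℂ A) : ‖φ (G u)‖ ≤ 1 / 4 :=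
    (norm_character_apply_le φ _).trans (hball u hu).2
  exact ⟨G, δ, hδ, hG0, fun u hu => (hball u hu).1.2.contDiffWithinAt, fun u hu =>
    ⟨(hball u hu).1.1, isUnit_one_sub_two_mul_of_norm_character_le (hφ u hu), hφ u hu⟩⟩

end Idempotents

section CharactersOfContinuousMaps

open WeakDual

variable {X A : Type*} [TopologicalSpace X] [CompactSpace X] [NormedCommRing A] [NormedAlgebra ℂ A]

theorem exists_forall_character_smul_eq [T2Space X] [CompleteSpace A]
    (Ψ : characterSpace ℂ C(X, A)) :
    ∃ d : X, ∀ (τ : C(X, ℂ)) (g : C(X, A)), Ψ (τ • g) = τ d * Ψ g := by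
  let ρ : C(X, ℂ) →ₐ[ℂ] C(X, A) :=
    (Algebra.ofId ℂ A).compLeftContinuous ℂ (continuous_algebraMap ℂ A)
  obtain ⟨d, hd⟩ := (CharacterSpace.continuousMapEval_bijective X ℂ).2
    (CharacterSpace.equivAlgHom.symm ((CharacterSpace.equivAlgHom Ψ).comp ρ))
  refine ⟨d, fun τ g => ?_⟩
  have hτ : τ d = Ψ (ρ τ) := congrArg (fun ψ : characterSpace ℂ C(X, ℂ) => ψ τ) hd
  rw [hτ, ← map_mul]
  congr 1
  ext x
  exact Algebra.smul_def (τ x) (g x)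

theorem mem_closure_smul_of_apply_eq_zero {g : C(X, A)} {d : X} (hg : g d = 0) :
    g ∈ closure {k : C(X, A) | ∃ τ : C(X, ℂ), τ d = 0 ∧ k = τ • g} := by
  refine Metric.mem_closure_iff.2 fun ε hε => ?_
  have hpos (x : X) : 0 < ‖g x‖ + ε := by positivity
  let τ : C(X, ℂ) := ⟨fun x => ((‖g x‖ / (‖g x‖ + ε) : ℝ) : ℂ),
    Complex.continuous_ofReal.comp (g.continuous.norm.div (by fun_prop) fun x => (hpos x).ne')⟩
  refine ⟨τ • g, ⟨τ, by simp [τ, hg], rfl⟩, ?_⟩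
  rw [dist_eq_norm, ContinuousMap.norm_lt_iff _ hε]
  intro x
  have hx : (g - τ • g) x = ((ε / (‖g x‖ + ε) : ℝ) : ℂ) • g x := by
    have h : (ε / (‖g x‖ + ε) : ℝ) = 1 - ‖g x‖ / (‖g x‖ + ε) := by
      rw [eq_sub_iff_add_eq, ← add_div, add_comm ε, div_self (hpos x).ne']
    rw [h, Complex.ofReal_sub, Complex.ofReal_one, sub_smul, one_smul]
    rfl
  rw [hx, norm_smul, Complex.norm_real, Real.norm_of_nonneg (by positivity), div_mul_eq_mul_div,
    div_lt_iff₀ (hpos x)]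
  nlinarith

theorem exists_character_apply_eq [T2Space X] [CompleteSpace A] (Ψ : characterSpace ℂ C(X, A)) :
    ∃ (φ : characterSpace ℂ A) (d : X), ∀ g : C(X, A), Ψ g = φ (g d) := by
  obtain ⟨d, hd⟩ := exists_forall_character_smul_eq Ψ
  have hvanish {g : C(X, A)} (hg : g d = 0) : Ψ g = 0 := by
    refine closure_minimal (t := {k | Ψ k = 0}) ?_
      (isClosed_eq (map_continuous Ψ) continuous_const) (mem_closure_smul_of_apply_eq_zero hg)
    rintro _ ⟨τ, hτ, rfl⟩
    rw [Set.mem_ofPred_eq, hd, hτ, zero_mul]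
  refine ⟨CharacterSpace.equivAlgHom.symm
    ((CharacterSpace.equivAlgHom Ψ).comp (IsScalarTower.toAlgHom ℂ A C(X, A))), d, fun g => ?_⟩
  rw [← sub_eq_zero]
  change Ψ g - Ψ (algebraMap A C(X, A) (g d)) = 0
  rw [← map_sub]
  exact hvanish (by simp)

end CharactersOfContinuousMaps

section CauchyPompeiu

open MeasureTheory Filter Topology ComplexConjugate Real

theorem integrableOn_polarCoord_target {F : Type*} [NormedAddCommGroup F] {g : ℝ × ℝ → F}
    (hg : Continuous g) {R : ℝ} (hR : ∀ p : ℝ × ℝ, R < p.1 → g p = 0) :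
    IntegrableOn g polarCoord.target := by
  have hK : IntegrableOn g (Icc (0 : ℝ) R ×ˢ Icc (-π) π) :=
    hg.continuousOn.integrableOn_compact (isCompact_Icc.prod isCompact_Icc)
  refine hK.of_forall_sdiff_eq_zero polarCoord.open_target.measurableSet ?_
  rintro ⟨r, θ⟩ ⟨⟨hr, hθ⟩, hn⟩
  exact hR _ (lt_of_not_ge fun hle => hn ⟨⟨le_of_lt hr, hle⟩, hθ.1.le, hθ.2.le⟩)

variable {E : Type*} [NormedAddCommGroup E] [NormedSpace ℂ E]

/-- The Cauchy–Riemann operator `∂/∂z̄`, through the real Fréchet derivative. -/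
def dbar (f : ℂ → E) (w : ℂ) : E :=
  (1 / 2 : ℂ) • (fderiv ℝ f w 1 + Complex.I • fderiv ℝ f w Complex.I)

theorem apply_add_I_smul_apply_I_mul (T : ℂ →L[ℝ] E) (u : ℂ) :
    T u + Complex.I • T (Complex.I * u) = conj u • (T 1 + Complex.I • T Complex.I) := by
  have hT (z : ℂ) : T z = (z.re : ℂ) • T 1 + (z.im : ℂ) • T Complex.I := by
    conv_lhs => rw [show z = z.re • (1 : ℂ) + z.im • Complex.I by simp]
    rw [map_add, map_smul, map_smul, Complex.coe_smul, Complex.coe_smul]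
  have hconj : conj u = u.re - u.im * Complex.I := by
    apply Complex.ext <;> simp
  rw [hT u, hT (Complex.I * u), hconj, Complex.I_mul_re, Complex.I_mul_im]
  match_scalars
  · ring
  · linear_combination u.im * Complex.I_sq

theorem smul_inv_smul_dbar_eq (f : ℂ → E) (w : ℂ) {r : ℝ} (hr : r ≠ 0) (θ : ℝ) :
    r • ((r * Complex.exp (θ * Complex.I))⁻¹ • dbar f w) =
      (1 / 2 : ℂ) • (fderiv ℝ f w (Complex.exp (θ * Complex.I)) +
        Complex.I • fderiv ℝ f w (Complex.I * Complex.exp (θ * Complex.I))) := by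
  have hr' : (r : ℂ) ≠ 0 := mod_cast hr
  have hinv : (Complex.exp (θ * Complex.I))⁻¹ = conj (Complex.exp (θ * Complex.I)) := by
    rw [Complex.inv_def, Complex.normSq_eq_norm_sq, Complex.norm_exp_ofReal_mul_I]
    simp
  rw [apply_add_I_smul_apply_I_mul, ← Complex.coe_smul, dbar, mul_inv, hinv]
  simp only [smul_smul]
  congr 1
  field_simp

variable {f : ℂ → E} {α : ℂ}

theorem integral_Ioi_fderiv_add_mul [CompleteSpace E] (hf : ContDiff ℝ 1 f)
    (hs : HasCompactSupport f) {u : ℂ} (hu : u ≠ 0) :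
    ∫ r : ℝ in Ioi 0, fderiv ℝ f (α + r * u) u = -f α := by
  have hemb : Topology.IsClosedEmbedding fun r : ℝ => α + r * u :=
    (Homeomorph.addLeft α).isClosedEmbedding.comp
      ((Homeomorph.mulRight₀ u hu).isClosedEmbedding.comp
        Complex.isometry_ofReal.isClosedEmbedding)
  have hc : HasCompactSupport fun r : ℝ => f (α + r * u) := hs.comp_isClosedEmbedding hemb
  have hd (r : ℝ) : HasDerivAt (fun r : ℝ => f (α + r * u)) (fderiv ℝ f (α + r * u) u) r := by
    have hline : HasDerivAt (fun r : ℝ => α + r * u) u r := by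
      simpa using ((Complex.ofRealCLM.hasDerivAt (x := r)).mul_const u).const_add α
    exact ((hf.differentiable one_ne_zero) _).hasFDerivAt.comp_hasDerivAt r hline
  have hcont : Continuous fun r : ℝ => fderiv ℝ f (α + r * u) u := by
    have := hf.continuous_fderiv one_ne_zero
    fun_prop
  have hc' : HasCompactSupport fun r : ℝ => fderiv ℝ f (α + r * u) u := by
    simpa only [funext fun r => (hd r).deriv] using hc.deriv
  simpa using integral_Ioi_of_hasDerivAt_of_tendsto' (a := (0 : ℝ)) (m := 0) (fun r _ => hd r)
    (hcont.integrable_of_hasCompactSupport hc').integrableOn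
    (hc.is_zero_at_infty.mono_left atTop_le_cocompact)

theorem integral_fderiv_circle_tangent [CompleteSpace E] (hf : ContDiff ℝ 1 f) {r : ℝ}
    (hr : r ≠ 0) :
    ∫ θ in Ioo (-π) π, fderiv ℝ f (α + r * Complex.exp (θ * Complex.I))
      (Complex.I * Complex.exp (θ * Complex.I)) = 0 := by
  have hd (θ : ℝ) : HasDerivAt (fun θ : ℝ => f (α + r * Complex.exp (θ * Complex.I)))
      (r • fderiv ℝ f (α + r * Complex.exp (θ * Complex.I))
        (Complex.I * Complex.exp (θ * Complex.I))) θ := by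
    have hcircle : HasDerivAt (fun θ : ℝ => α + r * Complex.exp (θ * Complex.I))
        (r • (Complex.I * Complex.exp (θ * Complex.I))) θ := by
      refine ((((Complex.ofRealCLM.hasDerivAt (x := θ)).mul_const Complex.I).cexp.const_mul
        (r : ℂ)).const_add α).congr_deriv ?_
      simp only [Complex.ofRealCLM_apply, Complex.ofReal_one, Complex.real_smul]
      ring
    rw [← map_smul]
    exact ((hf.differentiable one_ne_zero) _).hasFDerivAt.comp_hasDerivAt θ hcircle
  have hcont : Continuous fun θ : ℝ => fderiv ℝ f (α + r * Complex.exp (θ * Complex.I))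
      (Complex.I * Complex.exp (θ * Complex.I)) := by
    have := hf.continuous_fderiv one_ne_zero
    fun_prop
  have h := intervalIntegral.integral_eq_sub_of_hasDerivAt (a := -π) (b := π)
    (fun θ _ => hd θ) ((hcont.const_smul r).intervalIntegrable _ _)
  have hperiod : Complex.exp ((-π : ℝ) * Complex.I) = Complex.exp ((π : ℝ) * Complex.I) := by
    rw [Complex.ofReal_neg, neg_mul, Complex.exp_neg, Complex.exp_pi_mul_I]
    norm_num
  rw [hperiod, sub_self, intervalIntegral.integral_smul,
    intervalIntegral.integral_of_le (by linarith [pi_pos]), integral_Ioc_eq_integral_Ioo] at h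
  exact (smul_eq_zero.1 h).resolve_left hr

theorem integrableOn_fderiv_polarCoord (hf : ContDiff ℝ 1 f) (hs : HasCompactSupport f)
    {c : ℝ × ℝ → ℂ} (hc : Continuous c) :
    IntegrableOn (fun p : ℝ × ℝ => fderiv ℝ f (α + p.1 * Complex.exp (p.2 * Complex.I)) (c p))
      polarCoord.target := by
  have := hf.continuous_fderiv one_ne_zero
  obtain ⟨R, hR⟩ := (hs.fderiv (𝕜 := ℝ)).isCompact.isBounded.subset_closedBall α
  refine integrableOn_polarCoord_target (by fun_prop) (R := R) fun p hp => ?_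
  rw [image_eq_zero_of_notMem_tsupport (f := fderiv ℝ f), zero_apply]
  intro hmem
  have h := hR hmem
  rw [mem_closedBall, dist_eq_norm, add_sub_cancel_left, norm_mul, Complex.norm_exp_ofReal_mul_I,
    mul_one, Complex.norm_real, norm_eq_abs] at h
  linarith [le_abs_self p.1]

theorem integral_polarCoord_radial_fderiv [CompleteSpace E] (hf : ContDiff ℝ 1 f)
    (hs : HasCompactSupport f) :
    ∫ p in polarCoord.target, fderiv ℝ f (α + p.1 * Complex.exp (p.2 * Complex.I))
      (Complex.exp (p.2 * Complex.I)) = -(2 * π : ℂ) • f α := by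
  have hint := integrableOn_fderiv_polarCoord (α := α) hf hs
    (c := fun p => Complex.exp (p.2 * Complex.I)) (by fun_prop)
  rw [polarCoord_target, Measure.volume_eq_prod] at hint ⊢
  rw [← setIntegral_prod_swap, setIntegral_prod]
  · simp only [Prod.fst_swap, Prod.snd_swap,
      integral_Ioi_fderiv_add_mul hf hs (Complex.exp_ne_zero _)]
    rw [setIntegral_const, volume_real_Ioo_of_le (by linarith [pi_pos]), ← Complex.coe_smul]
    push_cast
    module
  · exact hint.swap

theorem integral_polarCoord_angular_fderiv [CompleteSpace E] (hf : ContDiff ℝ 1 f)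
    (hs : HasCompactSupport f) :
    ∫ p in polarCoord.target, fderiv ℝ f (α + p.1 * Complex.exp (p.2 * Complex.I))
      (Complex.I * Complex.exp (p.2 * Complex.I)) = 0 := by
  have hint := integrableOn_fderiv_polarCoord (α := α) hf hs
    (c := fun p => Complex.I * Complex.exp (p.2 * Complex.I)) (by fun_prop)
  rw [polarCoord_target, Measure.volume_eq_prod] at hint ⊢
  rw [setIntegral_prod _ hint]
  exact setIntegral_eq_zero_of_forall_eq_zero fun r hr =>
    integral_fderiv_circle_tangent hf (ne_of_gt hr)

/-- The **Cauchy–Pompeiu formula**; there is no boundary term because of the compact support. -/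
theorem integral_inv_sub_smul_dbar [CompleteSpace E] (hf : ContDiff ℝ 1 f)
    (hs : HasCompactSupport f) (α : ℂ) : ∫ w : ℂ, (w - α)⁻¹ • dbar f w = -(π : ℂ) • f α := by
  have hpolar : ∀ p ∈ polarCoord.target, p.1 • ((α + Complex.polarCoord.symm p - α)⁻¹ •
      dbar f (α + Complex.polarCoord.symm p)) = (1 / 2 : ℂ) •
        (fderiv ℝ f (α + p.1 * Complex.exp (p.2 * Complex.I)) (Complex.exp (p.2 * Complex.I)) +
          Complex.I • fderiv ℝ f (α + p.1 * Complex.exp (p.2 * Complex.I))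
            (Complex.I * Complex.exp (p.2 * Complex.I))) := by
    rintro ⟨r, θ⟩ ⟨hr, _⟩
    have hsymm : Complex.polarCoord.symm (r, θ) = r * Complex.exp (θ * Complex.I) := by
      rw [Complex.polarCoord_symm_apply, Complex.exp_mul_I, Complex.ofReal_cos, Complex.ofReal_sin]
    rw [add_sub_cancel_left, hsymm]
    exact smul_inv_smul_dbar_eq f _ (ne_of_gt hr) θ
  have hangular : IntegrableOn (fun p : ℝ × ℝ => Complex.I • fderiv ℝ f
      (α + p.1 * Complex.exp (p.2 * Complex.I)) (Complex.I * Complex.exp (p.2 * Complex.I)))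
      polarCoord.target :=
    (integrableOn_fderiv_polarCoord hf hs (by fun_prop)).smul _
  rw [← integral_add_left_eq_self _ α, ← Complex.integral_comp_polarCoord_symm,
    setIntegral_congr_fun polarCoord.open_target.measurableSet hpolar, integral_smul,
    integral_add (integrableOn_fderiv_polarCoord hf hs (by fun_prop)) hangular, integral_smul,
    integral_polarCoord_radial_fderiv hf hs, integral_polarCoord_angular_fderiv hf hs]
  module

theorem continuous_dbar (hf : ContDiff ℝ 1 f) : Continuous (dbar f) := by
  have := hf.continuous_fderiv one_ne_zero
  unfold dbar
  fun_prop

theorem dbar_comp_continuousLinearMap {F : Type*} [NormedAddCommGroup F] [NormedSpace ℂ F]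
    (T : E →L[ℂ] F) {w : ℂ} (hf : DifferentiableAt ℝ f w) :
    dbar (fun z => T (f z)) w = T (dbar f w) := by
  have h : fderiv ℝ (fun z => T (f z)) w = (T.restrictScalars ℝ).comp (fderiv ℝ f w) :=
    ((T.restrictScalars ℝ).hasFDerivAt.comp w hf.hasFDerivAt).fderiv
  simp [dbar, h]

variable {A : Type*} [NormedCommRing A] [NormedAlgebra ℂ A]

theorem dbar_fun_sub {g : ℂ → E} {w : ℂ} (hf : DifferentiableAt ℝ f w)
    (hg : DifferentiableAt ℝ g w) : dbar (fun z => f z - g z) w = dbar f w - dbar g w := by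
  simp only [dbar, fderiv_fun_sub hf hg, sub_apply]
  module

theorem dbar_fun_mul {f g : ℂ → A} {w : ℂ} (hf : DifferentiableAt ℝ f w)
    (hg : DifferentiableAt ℝ g w) :
    dbar (fun z => f z * g z) w = f w * dbar g w + g w * dbar f w := by
  simp only [dbar, fderiv_fun_mul hf hg, add_apply, smul_apply, smul_eq_mul, Algebra.smul_def]
  ring

theorem dbar_algebraMap_sub (a : A) (w : ℂ) : dbar (fun z => algebraMap ℂ A z - a) w = 0 := by
  have h : HasFDerivAt (fun z : ℂ => algebraMap ℂ A z - a)
      ((Algebra.linearMap ℂ A).toContinuousLinearMap.restrictScalars ℝ) w :=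
    ((Algebra.linearMap ℂ A).toContinuousLinearMap.restrictScalars ℝ).hasFDerivAt.sub_const a
  simp [dbar, h.fderiv, Algebra.smul_def, ← map_mul]

/-- Differentiating `e ^ 2 - e = (w - a) * q` makes `dbar e` itself divisible by `w - a`,
since `(2 * e - 1) ^ 2 = 1 + 4 * (w - a) * q`. -/
theorem dbar_eq_of_sq_sub_self_eq {a : A} {e q : ℂ → A} (he : ContDiff ℝ 1 e)
    (hq : ContDiff ℝ 1 q) (heq : ∀ w, e w ^ 2 - e w = (algebraMap ℂ A w - a) * q w) (w : ℂ) :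
    dbar e w =
      (algebraMap ℂ A w - a) * ((2 * e w - 1) * dbar q w - 4 * q w * dbar e w) := by
  have hed := he.differentiable one_ne_zero w
  have hqd := hq.differentiable one_ne_zero w
  have hlin : DifferentiableAt ℝ (fun z : ℂ => algebraMap ℂ A z - a) w :=
    ((Algebra.linearMap ℂ A).toContinuousLinearMap.restrictScalars ℝ).differentiableAt.sub_const a
  have hdbar : (2 * e w - 1) * dbar e w = (algebraMap ℂ A w - a) * dbar q w := by
    have h : dbar (fun z => e z * e z - e z) w =
        dbar (fun z => (algebraMap ℂ A z - a) * q z) w := by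
      simp only [← heq, sq]
    rw [dbar_fun_sub (hed.fun_mul hed) hed, dbar_fun_mul hed hed, dbar_fun_mul hlin hqd,
      dbar_algebraMap_sub] at h
    linear_combination h
  linear_combination (2 * e w - 1) * hdbar - 4 * dbar e w * heq w

theorem exists_forall_character_apply_eq_of_dbar_eq [CompleteSpace A] {a : A} {e k : ℂ → A}
    (he : ContDiff ℝ 1 e) (hes : HasCompactSupport e) (hk : Integrable k)
    (hdbar : ∀ w, dbar e w = (algebraMap ℂ A w - a) * k w) :
    ∃ x : A, ∀ φ : WeakDual.characterSpace ℂ A, φ x = φ (e (φ a)) := by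
  refine ⟨-(π : ℂ)⁻¹ • ∫ w, k w, fun φ => ?_⟩
  let T : A →L[ℂ] ℂ := WeakDual.CharacterSpace.toCLM φ
  have hTe : ContDiff ℝ 1 fun w => T (e w) := (T.restrictScalars ℝ).contDiff.comp he
  have hTs : HasCompactSupport fun w => T (e w) := hes.comp_left (map_zero T)
  have hae : (fun w => T (k w)) =ᵐ[volume] fun w => (w - φ a)⁻¹ • dbar (fun w => T (e w)) w := by
    filter_upwards [(Set.finite_singleton (φ a)).countable.ae_notMem volume] with w hw
    have hw' : w - φ a ≠ 0 := sub_ne_zero.2 hw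
    have hφw : φ (algebraMap ℂ A w) = w := AlgHomClass.commutes φ w
    rw [dbar_comp_continuousLinearMap T (he.differentiable one_ne_zero w), hdbar w]
    change φ (k w) = (w - φ a)⁻¹ * φ ((algebraMap ℂ A w - a) * k w)
    rw [map_mul, map_sub, hφw, inv_mul_cancel_left₀ hw']
  have hint : φ (∫ w, k w) = -(π : ℂ) * φ (e (φ a)) := by
    change T (∫ w, k w) = _
    rw [← T.integral_comp_comm hk, integral_congr_ae hae,
      integral_inv_sub_smul_dbar hTe hTs (φ a)]
    rfl
  have hπ : (π : ℂ) ≠ 0 := Complex.ofReal_ne_zero.2 pi_ne_zero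
  rw [map_smul, hint, smul_eq_mul]
  field_simp

theorem exists_forall_character_apply_eq_of_sq_sub_self_eq [CompleteSpace A] {a : A} {e q : ℂ → A}
    (he : ContDiff ℝ 1 e) (hes : HasCompactSupport e) (hq : ContDiff ℝ 1 q)
    (hqs : HasCompactSupport q)
    (heq : ∀ w, e w ^ 2 - e w = (algebraMap ℂ A w - a) * q w) :
    ∃ x : A, ∀ φ : WeakDual.characterSpace ℂ A, φ x = φ (e (φ a)) := by
  have hdq := continuous_dbar hq
  have hde := continuous_dbar he
  have hec := he.continuous
  have hqc := hq.continuous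
  have hdqs : HasCompactSupport (dbar q) := by
    refine (hqs.fderiv (𝕜 := ℝ)).mono fun w hw h => hw ?_
    simp [dbar, h]
  refine exists_forall_character_apply_eq_of_dbar_eq he hes ?_ (dbar_eq_of_sq_sub_self_eq he hq heq)
  exact Continuous.integrable_of_hasCompactSupport (by fun_prop)
    (hdqs.mul_left.sub hqs.mul_left.mul_right)

end CauchyPompeiu

section FibrewiseIdempotents

open WeakDual Filter Topology Manifold

theorem exists_contDiff_hasCompactSupport_forall_mem {E F : Type*} [NormedAddCommGroup E]
    [NormedSpace ℝ E] [FiniteDimensional ℝ E] [NormedAddCommGroup F] [NormedSpace ℝ F]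
    {K : Set E} (hK : IsCompact K) {t : E → Set F} (ht : ∀ x, Convex ℝ (t x))
    (hloc : ∀ x ∈ K, ∃ c, ∀ᶠ y in 𝓝 x, c ∈ t y) (hzero : ∀ x ∉ K, 0 ∈ t x) :
    ∃ g : E → F, ContDiff ℝ 1 g ∧ HasCompactSupport g ∧ ∀ x, g x ∈ t x := by
  obtain ⟨R, hKR⟩ := hK.isBounded.subset_ball 0
  obtain ⟨g, hg⟩ := exists_contMDiffMap_forall_mem_convex_of_local_const (n := 1) 𝓘(ℝ, E)
    (t := fun x => t x ∩ {c | x ∉ ball 0 R → c = 0})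
    (fun x => (ht x).inter fun a ha b hb α β _ _ _ hx => by simp [ha hx, hb hx]) fun x => by
      by_cases hx : x ∈ K
      · obtain ⟨c, hc⟩ := hloc x hx
        refine ⟨c, ?_⟩
        filter_upwards [hc, isOpen_ball.mem_nhds (hKR hx)] with y hy hyR
        exact ⟨hy, fun h => absurd hyR h⟩
      · refine ⟨0, ?_⟩
        filter_upwards [hK.isClosed.isOpen_compl.mem_nhds hx] with y hy
        exact ⟨hzero y hy, fun _ => rfl⟩
  refine ⟨g, g.contMDiff.contDiff, ?_, fun x => (hg x).1⟩
  exact HasCompactSupport.intro (isCompact_closedBall 0 R) fun x hx =>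
    (hg x).2 fun h => hx (ball_subset_closedBall h)

theorem exists_contDiff_norm_sub_lt {E F : Type*} [NormedAddCommGroup E]
    [NormedSpace ℝ E] [FiniteDimensional ℝ E] [NormedAddCommGroup F] [NormedSpace ℝ F]
    {K : Set E} (hK : IsCompact K) (f : C(K, F)) {ε : ℝ} (hε : 0 < ε) :
    ∃ g : E → F, ContDiff ℝ 1 g ∧ HasCompactSupport g ∧ ∀ x : K, ‖g x - f x‖ < ε := by
  have hloc (x : E) (hx : x ∈ K) :
      ∃ c, ∀ᶠ y in 𝓝 x, c ∈ ⋂ hy : y ∈ K, ball (f ⟨y, hy⟩) ε := by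
    have h : ∀ᶠ y : K in 𝓝 ⟨x, hx⟩, f ⟨x, hx⟩ ∈ ball (f y) ε := by
      filter_upwards [f.continuous.continuousAt.eventually (ball_mem_nhds _ hε)] with y hy
      exact mem_ball_comm.1 hy
    rw [nhds_subtype_eq_comap] at h
    exact ⟨f ⟨x, hx⟩, (eventually_comap.1 h).mono fun y hy => mem_iInter.2 fun hyK => hy _ rfl⟩
  obtain ⟨g, hg, hgs, hgt⟩ := exists_contDiff_hasCompactSupport_forall_mem hK
    (fun x => convex_iInter fun _ => convex_ball _ _) hloc
    fun x hx => mem_iInter.2 fun h => absurd h hx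
  exact ⟨g, hg, hgs, fun x => mem_ball_iff_norm.1 (mem_iInter.1 (hgt x) x.2)⟩

theorem contDiff_ringInverse_comp {E R : Type*} [NormedAddCommGroup E] [NormedSpace ℝ E]
    [NormedRing R] [NormedAlgebra ℝ R] [HasSummableGeomSeries R] {n : WithTop ℕ∞} {f : E → R}
    (hf : ContDiff ℝ n f) (hu : ∀ x, IsUnit (f x)) : ContDiff ℝ n fun x => Ring.inverse (f x) :=
  contDiff_iff_contDiffAt.2 fun x => by
    obtain ⟨u, hu⟩ := hu x
    exact ContDiffAt.comp x (hu ▸ contDiffAt_ringInverse ℝ u) hf.contDiffAt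

variable {A : Type*} [NormedCommRing A] [NormedAlgebra ℂ A] {a : A}

theorem exists_contDiff_norm_sub_mul_sub_lt {p : ℂ → A} (hp : Continuous p)
    (hps : HasCompactSupport p) {δ : ℝ} (hδ : 0 < δ)
    (hspec : ∀ w ∈ spectrum ℂ a, ∃ h, ‖(algebraMap ℂ A w - a) * h - p w‖ < δ) :
    ∃ h : ℂ → A, ContDiff ℝ 1 h ∧ HasCompactSupport h ∧
      ∀ w, ‖(algebraMap ℂ A w - a) * h w - p w‖ < δ := by
  have hex (w : ℂ) : ∃ c, ‖(algebraMap ℂ A w - a) * c - p w‖ < δ := by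
    by_cases hw : w ∈ spectrum ℂ a
    · exact hspec w hw
    · obtain ⟨b, hb⟩ := (spectrum.notMem_iff.1 hw).exists_right_inv
      exact ⟨b * p w, by rwa [← mul_assoc, hb, one_mul, sub_self, norm_zero]⟩
  refine exists_contDiff_hasCompactSupport_forall_mem hps
    (t := fun w => {c | ‖(algebraMap ℂ A w - a) * c - p w‖ < δ}) (fun w => ?_) (fun w _ => ?_)
    fun w hw => by simpa [image_eq_zero_of_notMem_tsupport hw] using hδ
  · have h : {c | ‖(algebraMap ℂ A w - a) * c - p w‖ < δ} =
        LinearMap.mulLeft ℝ (algebraMap ℂ A w - a) ⁻¹' ball (p w) δ := by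
      ext c
      simp [dist_eq_norm]
    rw [h]
    exact (convex_ball _ _).linear_preimage _
  · obtain ⟨c, hc⟩ := hex w
    have hcont : Continuous fun w => ‖(algebraMap ℂ A w - a) * c - p w‖ := by
      have := continuous_algebraMap ℂ A
      fun_prop
    exact ⟨c, hcont.continuousAt.eventually_lt_const hc⟩

variable [CompleteSpace A] {v : characterSpace ℂ A → ℂ}

theorem eventually_norm_character_sub_lt (hv : Continuous v) {f : A} {c : ℂ} {ε : ℝ}
    (hf : ∀ φ : characterSpace ℂ A, φ a = c → ‖φ f - v φ‖ < ε) :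
    ∀ᶠ w in 𝓝 c, ∀ φ : characterSpace ℂ A, φ a = w → ‖φ f - v φ‖ < ε := by
  have heval (x : A) : Continuous fun φ : characterSpace ℂ A => φ x :=
    (WeakDual.eval_continuous x).comp continuous_subtype_val
  have hcompact : IsCompact {φ : characterSpace ℂ A | ε ≤ ‖φ f - v φ‖} :=
    (isClosed_le continuous_const ((heval f).sub hv).norm).isCompact
  have hc : c ∉ (fun φ : characterSpace ℂ A => φ a) '' {φ | ε ≤ ‖φ f - v φ‖} := by
    rintro ⟨φ, hφ, rfl⟩
    exact absurd (hf φ rfl) (not_lt.2 hφ)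
  filter_upwards [(hcompact.image (heval a)).isClosed.isOpen_compl.mem_nhds hc] with w hw φ hφ
  by_contra! h
  exact hw ⟨φ, h, hφ⟩

theorem exists_continuousMap_character_near (hv : Continuous v)
    (hfib : ∀ c : ℂ, ∃ f : A, ∀ φ : characterSpace ℂ A, φ a = c → ‖φ f - v φ‖ < 1 / 10) :
    ∃ F : C(spectrum ℂ a, A), ∀ (φ : characterSpace ℂ A) (w : spectrum ℂ a), φ a = w →
      ‖φ (F w) - v φ‖ < 1 / 10 := by
  obtain ⟨F, hF⟩ := exists_continuous_forall_mem_convex_of_local_const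
    (t := fun w : spectrum ℂ a => ⋂ (φ : characterSpace ℂ A) (_ : φ a = w),
      CharacterSpace.toCLM φ ⁻¹' ball (v φ) (1 / 10))
    (fun w => convex_iInter₂ fun φ _ => (convex_ball _ _).linear_preimage
      ((CharacterSpace.toCLM φ).restrictScalars ℝ).toLinearMap) fun w => by
      obtain ⟨f, hf⟩ := hfib w
      have hev : ∀ᶠ y : spectrum ℂ a in 𝓝 w, ∀ φ : characterSpace ℂ A, φ a = y →
          ‖φ f - v φ‖ < 1 / 10 :=
        (continuous_subtype_val.tendsto w).eventually (eventually_norm_character_sub_lt hv hf)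
      refine ⟨f, hev.mono fun y hy => ?_⟩
      exact mem_iInter₂.2 fun φ hφ => mem_ball_iff_norm.2 (hy φ hφ)
  exact ⟨F, fun φ w hφ => mem_ball_iff_norm.1 (mem_iInter₂.1 (hF w) φ hφ)⟩

/-- The element `w ↦ w - a` of the Banach algebra of continuous `A`-valued functions on the
spectrum of `a`. -/
def spectrumSub (a : A) : C(spectrum ℂ a, A) :=
  ⟨fun w => algebraMap ℂ A w - a,
    ((continuous_algebraMap ℂ A).comp continuous_subtype_val).sub continuous_const⟩

theorem forall_mem_closure_span_singleton_eq_zero_iff {B : Type*} [NormedCommRing B]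
    [NormedAlgebra ℂ B] (ψ : characterSpace ℂ B) (u : B) :
    (∀ x ∈ (Ideal.span {u}).closure, ψ x = 0) ↔ ψ u = 0 := by
  refine ⟨fun h => h u (subset_closure (Ideal.mem_span_singleton_self u)), fun h x hx => ?_⟩
  refine closure_minimal (fun y hy => ?_) (isClosed_eq (map_continuous ψ) continuous_const) hx
  obtain ⟨b, rfl⟩ := Ideal.mem_span_singleton'.1 hy
  rw [Set.mem_ofPred_eq, map_mul, h, mul_zero]

theorem exists_continuousMap_idempotent_mod (hv01 : ∀ φ, v φ = 0 ∨ v φ = 1) (hv : Continuous v)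
    (hfib : ∀ c : ℂ, ∃ f : A, ∀ φ : characterSpace ℂ A, φ a = c → ‖φ f - v φ‖ < 1 / 10) :
    ∃ e : C(spectrum ℂ a, A), e ^ 2 - e ∈ (Ideal.span {spectrumSub a}).closure ∧
      ∀ (φ : characterSpace ℂ A) (w : spectrum ℂ a), φ a = w → φ (e w) = v φ := by
  obtain ⟨F, hF⟩ := exists_continuousMap_character_near hv hfib
  choose φ w hφw using exists_character_apply_eq (X := spectrum ℂ a) (A := A)
  have hφ_sub (φ : characterSpace ℂ A) (w : spectrum ℂ a) :
      φ (spectrumSub a w) = 0 ↔ φ a = w := by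
    change φ (algebraMap ℂ A w - a) = 0 ↔ _
    have hconst : φ (algebraMap ℂ A w) = w := AlgHomClass.commutes φ (w : ℂ)
    rw [map_sub, hconst, sub_eq_zero, eq_comm]
  obtain ⟨e, he, hev⟩ := exists_idempotent_mod_of_character_near isClosed_closure (f := F)
    (I := (Ideal.span {spectrumSub a}).closure) (v := fun Ψ => v (φ Ψ)) (fun Ψ => hv01 _)
    fun Ψ hΨ => by
      rw [forall_mem_closure_span_singleton_eq_zero_iff, hφw, hφ_sub] at hΨ
      rw [hφw]
      exact (hF _ _ hΨ).le
  refine ⟨e, he, fun φ₀ w₀ h₀ => ?_⟩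
  let Ψ : characterSpace ℂ C(spectrum ℂ a, A) := CharacterSpace.equivAlgHom.symm
    ((CharacterSpace.equivAlgHom φ₀).comp (ContinuousMap.evalAlgHom ℂ A w₀))
  have hΨ (g : C(spectrum ℂ a, A)) : Ψ g = φ₀ (g w₀) := rfl
  have hφΨ : φ Ψ = φ₀ := by
    ext x
    exact (hφw Ψ (ContinuousMap.const _ x)).symm
  rw [← hΨ, hev Ψ, hφΨ]
  rwa [forall_mem_closure_span_singleton_eq_zero_iff, hΨ, hφ_sub]

theorem exists_contDiff_almost_idempotent (hv01 : ∀ φ, v φ = 0 ∨ v φ = 1) (hv : Continuous v)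
    (hfib : ∀ c : ℂ, ∃ f : A, ∀ φ : characterSpace ℂ A, φ a = c → ‖φ f - v φ‖ < 1 / 10)
    {δ : ℝ} (hδ : 0 < δ) :
    ∃ g : ℂ → A, ContDiff ℝ 1 g ∧ HasCompactSupport g ∧
      (∀ w ∈ spectrum ℂ a, ∃ h, ‖(algebraMap ℂ A w - a) * h - (g w ^ 2 - g w)‖ < δ) ∧
      ∀ φ : characterSpace ℂ A, ‖φ (g (φ a)) - v φ‖ ≤ 1 / 10 := by
  obtain ⟨e, he, hev⟩ := exists_continuousMap_idempotent_mod hv01 hv hfib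
  obtain ⟨b, hb, hbe⟩ := Metric.mem_closure_iff.1 he δ hδ
  obtain ⟨h, rfl⟩ := Ideal.mem_span_singleton.1 hb
  have hnear : ∀ᶠ g in 𝓝 e, ‖spectrumSub a * h - (g ^ 2 - g)‖ < δ ∧
      ‖g - e‖ * ‖(1 : A)‖ ≤ 1 / 10 := by
    refine .and ?_ ?_
    · have hc : Continuous fun g => ‖spectrumSub a * h - (g ^ 2 - g)‖ := by fun_prop
      exact hc.continuousAt.eventually_lt_const (by simpa [dist_eq_norm, norm_sub_rev] using hbe)
    · have hc : Continuous fun g => ‖g - e‖ * ‖(1 : A)‖ := by fun_prop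
      exact hc.continuousAt.eventually (ge_mem_nhds (by simp))
  obtain ⟨η, hη, hball⟩ := Metric.eventually_nhds_iff.1 hnear
  obtain ⟨g, hg, hgs, hge⟩ := exists_contDiff_norm_sub_lt (spectrum.isCompact a) e hη
  let g' : C(spectrum ℂ a, A) := ⟨fun w => g w, hg.continuous.comp continuous_subtype_val⟩
  obtain ⟨hg'δ, hg'φ⟩ := hball (y := g')
    ((ContinuousMap.dist_lt_iff hη).2 fun w => (dist_eq_norm _ _).trans_lt (hge w))
  refine ⟨g, hg, hgs, fun w hw => ⟨h ⟨w, hw⟩, ?_⟩, fun φ => ?_⟩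
  · exact (ContinuousMap.norm_coe_le_norm
      (spectrumSub a * h - (g' ^ 2 - g')) ⟨w, hw⟩).trans_lt hg'δ
  · have hφ : φ a ∈ spectrum ℂ a := CharacterSpace.mem_spectrum_iff_exists.2 ⟨φ, rfl⟩
    rw [← hev φ ⟨φ a, hφ⟩ rfl, ← map_sub]
    refine ((norm_character_apply_le φ _).trans ?_).trans hg'φ
    gcongr
    exact ContinuousMap.norm_coe_le_norm (g' - e) ⟨φ a, hφ⟩

theorem exists_contDiff_idempotent_mod (hv01 : ∀ φ, v φ = 0 ∨ v φ = 1) (hv : Continuous v)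
    (hfib : ∀ c : ℂ, ∃ f : A, ∀ φ : characterSpace ℂ A, φ a = c → ‖φ f - v φ‖ < 1 / 10) :
    ∃ e q : ℂ → A, (ContDiff ℝ 1 e ∧ HasCompactSupport e) ∧
      (ContDiff ℝ 1 q ∧ HasCompactSupport q) ∧
      (∀ w, e w ^ 2 - e w = (algebraMap ℂ A w - a) * q w) ∧
      ∀ φ : characterSpace ℂ A, φ (e (φ a)) = v φ := by
  obtain ⟨G, δ, hδ, hG0, hGd, hG⟩ := exists_contDiffOn_sub_sq_eq (A := A)
  obtain ⟨g, hg, hgs, hgspec, hgφ⟩ := exists_contDiff_almost_idempotent hv01 hv hfib hδ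
  obtain ⟨h, hh, hhs, hδ'⟩ := exists_contDiff_norm_sub_mul_sub_lt (a := a)
    (p := fun w => g w ^ 2 - g w) (by have := hg.continuous; fun_prop)
    (hgs.mono fun w hw h0 => hw (by simp [h0])) hδ hgspec
  let s (w : ℂ) : A := (algebraMap ℂ A w - a) * h w - (g w ^ 2 - g w)
  have hs (w : ℂ) : s w ∈ ball (0 : A) δ := mem_ball_zero_iff.2 (hδ' w)
  have hsd : ContDiff ℝ 1 s := by
    have : ContDiff ℝ 1 (algebraMap ℂ A) :=
      ((Algebra.linearMap ℂ A).toContinuousLinearMap.restrictScalars ℝ).contDiff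
    fun_prop
  have hy : ContDiff ℝ 1 fun w => G (s w) := contDiff_iff_contDiffAt.2 fun w =>
    ((hGd.contDiffAt (isOpen_ball.mem_nhds (hs w))).restrict_scalars ℝ).comp w hsd.contDiffAt
  have hinv : ContDiff ℝ 1 fun w => Ring.inverse (1 - 2 * G (s w)) :=
    contDiff_ringInverse_comp (contDiff_const.sub (contDiff_const.mul hy))
      fun w => (hG _ (hs w)).2.1
  have heq (w : ℂ) :
      idempotentCorrection (g w) (G (s w)) ^ 2 - idempotentCorrection (g w) (G (s w)) =
        (algebraMap ℂ A w - a) * (h w * Ring.inverse (1 - 2 * G (s w)) ^ 2) := by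
    rw [idempotentCorrection_sq_sub_self _ (hG _ (hs w)).2.1, (hG _ (hs w)).1]
    ring
  refine ⟨fun w => idempotentCorrection (g w) (G (s w)),
    fun w => h w * Ring.inverse (1 - 2 * G (s w)) ^ 2,
    ⟨(hg.sub hy).mul hinv, ?_⟩, ⟨hh.mul (hinv.pow 2), hhs.mul_right⟩, heq, fun φ => ?_⟩
  · refine HasCompactSupport.intro (hgs.isCompact.union hhs.isCompact) fun w hw => ?_
    have hgw := image_eq_zero_of_notMem_tsupport fun h => hw (.inl h)
    have hhw := image_eq_zero_of_notMem_tsupport fun h => hw (.inr h)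
    simp [idempotentCorrection, s, hgw, hhw, hG0]
  · have hu := hG _ (hs (φ a))
    refine map_idempotentCorrection_eq φ hu.2.1 (hv01 φ) (hgφ φ) (hu.2.2 φ) ?_
    have hφa : φ (algebraMap ℂ A (φ a) - a) = 0 := by
      rw [map_sub, sub_eq_zero]
      exact AlgHomClass.commutes φ (φ a)
    rw [heq, map_mul, hφa, zero_mul]

/-- A fibred **Shilov idempotent theorem**. -/
theorem exists_character_eq_of_fibrewise_near (hv01 : ∀ φ, v φ = 0 ∨ v φ = 1) (hv : Continuous v)
    (hfib : ∀ c : ℂ, ∃ f : A, ∀ φ : characterSpace ℂ A, φ a = c → ‖φ f - v φ‖ < 1 / 10) :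
    ∃ x : A, ∀ φ : characterSpace ℂ A, φ x = v φ := by
  obtain ⟨e, q, ⟨he, hes⟩, ⟨hq, hqs⟩, heq, hev⟩ := exists_contDiff_idempotent_mod hv01 hv hfib
  obtain ⟨x, hx⟩ := exists_forall_character_apply_eq_of_sq_sub_self_eq he hes hq hqs heq
  exact ⟨x, fun φ => (hx φ).trans (hev φ)⟩

end FibrewiseIdempotents

section PolynomialHulls

open WeakDual

variable {σ τ : Type*} {K : Set (σ → ℂ)}

/-- The polynomial hull in `ℂ^σ`. Quantifying over the bounds `C` avoids the junk values of the
supremum, and `0 ≤ C` makes the hull of `∅` empty. -/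
def polynomialHull (K : Set (σ → ℂ)) : Set (σ → ℂ) :=
  {z | ∀ (p : MvPolynomial σ ℂ) (C : ℝ), 0 ≤ C → (∀ w ∈ K, ‖eval w p‖ ≤ C) → ‖eval z p‖ ≤ C}

theorem subset_polynomialHull : K ⊆ polynomialHull K := fun _ hz _ _ _ h => h _ hz

theorem polynomialHull_mono {K' : Set (σ → ℂ)} (h : K' ⊆ K) :
    polynomialHull K' ⊆ polynomialHull K :=
  fun _ hz p C hC hK => hz p C hC fun w hw => hK w (h hw)

theorem polynomialHull_inter_fibre_subset (K : Set (σ → ℂ)) (i : σ) (c : ℂ) :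
    polynomialHull (K ∩ {z | z i = c}) ⊆ polynomialHull K ∩ {z | z i = c} := by
  refine fun z hz => ⟨polynomialHull_mono inter_subset_left hz, ?_⟩
  have h := hz (X i - C c) 0 le_rfl fun w hw => by simp [show w i = c from hw.2]
  simpa [sub_eq_zero] using h

theorem image_polynomialHull_subset [Finite σ] (T : (σ → ℂ) →ₗ[ℂ] (τ → ℂ)) (K : Set (σ → ℂ)) :
    T '' polynomialHull K ⊆ polynomialHull (T '' K) := by
  classical
  have := Fintype.ofFinite σ
  rintro _ ⟨z, hz, rfl⟩ p C hC hp
  have heval (w : σ → ℂ) :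
      eval w (bind₁ (fun i => ∑ j, MvPolynomial.C (T (Pi.single j 1) i) * X j) p) =
        eval (T w) p := by
    rw [eval, eval₂Hom_bind₁]
    congr 2
    ext i
    have h := congrArg T (pi_eq_sum_univ' w)
    simp [h, mul_comm]
  rw [← heval]
  exact hz _ C hC fun w hw => heval w ▸ hp _ (mem_image_of_mem T hw)

theorem polynomialHull_image [Finite σ] [Finite τ] (T : (σ → ℂ) ≃ₗ[ℂ] (τ → ℂ))
    (K : Set (σ → ℂ)) : polynomialHull (T '' K) = T '' polynomialHull K := by
  refine Subset.antisymm (fun z hz => ⟨T.symm z, ?_, T.apply_symm_apply z⟩)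
    (image_polynomialHull_subset T.toLinearMap K)
  have h := image_polynomialHull_subset T.symm.toLinearMap _ (mem_image_of_mem _ hz)
  simpa [image_image] using h

section UniformAlgebra

variable [CompactSpace K]

/-- The algebra `P(K)` of uniform limits of polynomials on `K`. -/
def uniformPolynomialAlgebra (K : Set (σ → ℂ)) [CompactSpace K] : Subalgebra ℂ C(K, ℂ) :=
  (aeval (R := ℂ) fun i =>
    (⟨fun z : K => z.1 i, (continuous_apply i).comp continuous_subtype_val⟩ :
      C(K, ℂ))).range.topologicalClosure

instance : CompleteSpace (uniformPolynomialAlgebra K) :=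
  (Subalgebra.isClosed_topologicalClosure _).completeSpace_coe

/-- Polynomials as elements of `P(K)`. -/
def toUniformPolynomialAlgebra (K : Set (σ → ℂ)) [CompactSpace K] :
    MvPolynomial σ ℂ →ₐ[ℂ] uniformPolynomialAlgebra K :=
  AlgHom.codRestrict _ (uniformPolynomialAlgebra K) fun p =>
    Subalgebra.le_topologicalClosure _ (AlgHom.mem_range_self _ p)

theorem toUniformPolynomialAlgebra_apply (p : MvPolynomial σ ℂ) (z : K) :
    (toUniformPolynomialAlgebra K p).1 z = eval z.1 p := by
  have h : (ContinuousMap.evalAlgHom ℂ ℂ z).comp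
      ((uniformPolynomialAlgebra K).val.comp (toUniformPolynomialAlgebra K)) = aeval z.1 := by
    ext j
    rw [aeval_X]
    exact DFunLike.congr_fun (aeval_X (R := ℂ) (S₁ := C(K, ℂ)) _ j) z
  exact (DFunLike.congr_fun h p).trans (coe_aeval_eq_eval z.1 ▸ rfl)

theorem denseRange_toUniformPolynomialAlgebra : DenseRange (toUniformPolynomialAlgebra K) := by
  refine Metric.denseRange_iff.2 fun f ε hε => ?_
  obtain ⟨_, ⟨p, rfl⟩, hp⟩ := Metric.mem_closure_iff.1 f.2 ε hε
  exact ⟨p, hp⟩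

theorem norm_toUniformPolynomialAlgebra_le {p : MvPolynomial σ ℂ} {C : ℝ} (hC : 0 ≤ C)
    (hp : ∀ z ∈ K, ‖eval z p‖ ≤ C) : ‖toUniformPolynomialAlgebra K p‖ ≤ C :=
  (ContinuousMap.norm_le _ hC).2 fun w =>
    (congrArg norm (toUniformPolynomialAlgebra_apply p w)).trans_le (hp w w.2)

theorem character_toUniformPolynomialAlgebra
    (φ : characterSpace ℂ (uniformPolynomialAlgebra K)) (p : MvPolynomial σ ℂ) :
    φ (toUniformPolynomialAlgebra K p) =
      eval (fun j => φ (toUniformPolynomialAlgebra K (X j))) p := by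
  have h := aeval_unique ((CharacterSpace.toAlgHom φ).comp (toUniformPolynomialAlgebra K))
  exact (DFunLike.congr_fun h p).trans
    (coe_aeval_eq_eval (fun j => φ (toUniformPolynomialAlgebra K (X j))) ▸ rfl)

theorem mem_polynomialHull_of_character (φ : characterSpace ℂ (uniformPolynomialAlgebra K)) :
    (fun j => φ (toUniformPolynomialAlgebra K (X j))) ∈ polynomialHull K := by
  intro p C hC hp
  rw [← character_toUniformPolynomialAlgebra]
  have hone : ‖(1 : uniformPolynomialAlgebra K)‖ ≤ 1 :=
    (ContinuousMap.norm_le _ zero_le_one).2 fun w => norm_one.le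
  refine (norm_character_apply_le φ _).trans ?_
  exact (mul_le_mul (norm_toUniformPolynomialAlgebra_le hC hp) hone (norm_nonneg _) hC).trans_eq
    (mul_one C)

theorem exists_character_apply_eq_eval (hK : polynomialHull K ⊆ K)
    (φ : characterSpace ℂ (uniformPolynomialAlgebra K)) : ∃ z : K, ∀ f, φ f = f.1 z := by
  refine ⟨⟨_, hK (mem_polynomialHull_of_character φ)⟩, fun f => ?_⟩
  refine denseRange_toUniformPolynomialAlgebra.induction_on f (isClosed_eq (map_continuous φ) ?_)
    fun p => ?_
  · exact (continuous_eval_const _).comp continuous_subtype_val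
  · rw [character_toUniformPolynomialAlgebra, toUniformPolynomialAlgebra_apply]

theorem exists_continuous_character_apply_eq_eval (hK : polynomialHull K ⊆ K) :
    ∃ π : characterSpace ℂ (uniformPolynomialAlgebra K) → K,
      Continuous π ∧ Function.Surjective π ∧ ∀ (φ : characterSpace ℂ (uniformPolynomialAlgebra K))
        (f : uniformPolynomialAlgebra K), φ f = f.1 (π φ) := by
  choose π hπ using exists_character_apply_eq_eval hK
  have hcoord (φ) (j : σ) : (π φ).1 j = φ (toUniformPolynomialAlgebra K (X j)) := by
    rw [hπ, toUniformPolynomialAlgebra_apply, eval_X]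
  refine ⟨π, ?_, fun z => ?_, hπ⟩
  · refine Continuous.subtype_mk (continuous_pi fun j => ?_) _
    simp only [hcoord]
    exact (WeakDual.eval_continuous _).comp continuous_subtype_val
  · refine ⟨CharacterSpace.equivAlgHom.symm
      ((ContinuousMap.evalAlgHom ℂ ℂ z).comp (uniformPolynomialAlgebra K).val), ?_⟩
    ext j
    rw [hcoord]
    exact (toUniformPolynomialAlgebra_apply _ z).trans (eval_X j)

end UniformAlgebra

theorem exists_polynomial_near_zero_one_valued_of_fibres (hKc : IsCompact K)
    (hK : polynomialHull K ⊆ K) {u : (σ → ℂ) → ℂ} (hu : ContinuousOn u K)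
    (hu01 : ∀ z ∈ K, u z = 0 ∨ u z = 1) (i : σ)
    (hfib : ∀ c : ℂ, ∃ p : MvPolynomial σ ℂ, ∀ z ∈ K, z i = c → ‖eval z p - u z‖ < 1 / 10)
    {ε : ℝ} (hε : 0 < ε) : ∃ p : MvPolynomial σ ℂ, ∀ z ∈ K, ‖eval z p - u z‖ < ε := by
  have := isCompact_iff_compactSpace.1 hKc
  obtain ⟨π, hπc, hπs, hπ⟩ := exists_continuous_character_apply_eq_eval hK
  have hπeval (φ) (p : MvPolynomial σ ℂ) :
      φ (toUniformPolynomialAlgebra K p) = eval (π φ).1 p := by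
    rw [hπ, toUniformPolynomialAlgebra_apply]
  obtain ⟨e, he⟩ := exists_character_eq_of_fibrewise_near
    (a := toUniformPolynomialAlgebra K (X i)) (v := fun φ => u (π φ))
    (fun φ => hu01 _ (π φ).2) (hu.domRestrict.comp hπc) fun c => by
      obtain ⟨p, hp⟩ := hfib c
      refine ⟨toUniformPolynomialAlgebra K p, fun φ hφ => ?_⟩
      rw [hπeval, eval_X] at hφ
      rw [hπeval]
      exact hp _ (π φ).2 hφ
  obtain ⟨p, hp⟩ := Metric.denseRange_iff.1 denseRange_toUniformPolynomialAlgebra e ε hε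
  refine ⟨p, fun z hz => ?_⟩
  obtain ⟨φ, hφ⟩ := hπs ⟨z, hz⟩
  have heu : e.1 ⟨z, hz⟩ = u z := by rw [← hφ, ← hπ, he, hφ]
  rw [← toUniformPolynomialAlgebra_apply p ⟨z, hz⟩, ← heu, ← dist_eq_norm, dist_comm]
  exact (ContinuousMap.dist_apply_le_dist _).trans_lt hp

/-- By induction on a set of coordinates outside which all coordinates are constant on `K`: the
sets `K ∩ {z | z i = c}` have one such coordinate fewer. -/
theorem exists_polynomial_near_zero_one_valued [Finite σ] (hKc : IsCompact K)
    (hK : polynomialHull K ⊆ K) {u : (σ → ℂ) → ℂ} (hu : ContinuousOn u K)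
    (hu01 : ∀ z ∈ K, u z = 0 ∨ u z = 1) {ε : ℝ} (hε : 0 < ε) :
    ∃ p : MvPolynomial σ ℂ, ∀ z ∈ K, ‖eval z p - u z‖ < ε := by
  classical
  have := Fintype.ofFinite σ
  suffices H : ∀ (T : Finset σ) (K : Set (σ → ℂ)), IsCompact K → polynomialHull K ⊆ K →
      ContinuousOn u K → (∀ z ∈ K, u z = 0 ∨ u z = 1) →
      (∀ i ∉ T, ∀ z ∈ K, ∀ w ∈ K, z i = w i) → ∀ ε > 0,
      ∃ p : MvPolynomial σ ℂ, ∀ z ∈ K, ‖eval z p - u z‖ < ε from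
    H Finset.univ K hKc hK hu hu01 (fun i hi => absurd (Finset.mem_univ i) hi) ε hε
  intro T
  induction T using Finset.induction_on with
  | empty =>
    intro K _ _ _ _ hconst ε hε
    rcases K.eq_empty_or_nonempty with rfl | ⟨z, hz⟩
    · exact ⟨0, by simp⟩
    · refine ⟨C (u z), fun w hw => ?_⟩
      have h : w = z := funext fun i => hconst i (by simp) w hw z hz
      simpa [h] using hε
  | insert i T _ ih =>
    intro K hKc hK hu hu01 hconst ε hε
    refine exists_polynomial_near_zero_one_valued_of_fibres hKc hK hu hu01 i (fun c => ?_) hε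
    have hcl : IsClosed {z : σ → ℂ | z i = c} :=
      isClosed_eq (continuous_apply i) continuous_const
    have hconst' (j) (hj : j ∉ T) :
        ∀ z ∈ K ∩ {z | z i = c}, ∀ w ∈ K ∩ {z | z i = c}, z j = w j := by
      rintro z ⟨hz, hzc⟩ w ⟨hw, hwc⟩
      rcases eq_or_ne j i with rfl | hji
      · exact Eq.trans hzc hwc.symm
      · exact hconst j (by simp [hji, hj]) z hz w hw
    obtain ⟨p, hp⟩ := ih (K ∩ {z | z i = c}) (hKc.inter_right hcl)
      ((polynomialHull_inter_fibre_subset K i c).trans (inter_subset_inter_left _ hK))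
      (hu.mono inter_subset_left) (fun z hz => hu01 z hz.1) hconst'
      (1 / 10) (by norm_num)
    exact ⟨p, fun z hz hzc => hp z ⟨hz, hzc⟩⟩

variable {K₀ K₁ K' : Set (σ → ℂ)}

theorem exists_polynomial_near_indicator [Finite σ] (h₀ : IsCompact K₀) (h₁ : IsCompact K₁)
    (hd : Disjoint K₀ K₁) (hK : polynomialHull (K₀ ∪ K₁) ⊆ K₀ ∪ K₁) {ε : ℝ} (hε : 0 < ε) :
    ∃ p : MvPolynomial σ ℂ, (∀ z ∈ K₀, ‖eval z p‖ < ε) ∧ ∀ z ∈ K₁, ‖eval z p - 1‖ < ε := by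
  have hu₀ (z) (hz : z ∈ K₀) : K₁.indicator (1 : (σ → ℂ) → ℂ) z = 0 :=
    indicator_of_notMem (disjoint_left.1 hd hz) _
  have hu₁ (z) (hz : z ∈ K₁) : K₁.indicator (1 : (σ → ℂ) → ℂ) z = 1 := indicator_of_mem hz _
  have hu : ContinuousOn (K₁.indicator (1 : (σ → ℂ) → ℂ)) (K₀ ∪ K₁) :=
    (continuousOn_const.congr hu₀).union_of_isClosed (continuousOn_const.congr hu₁)
      h₀.isClosed h₁.isClosed
  obtain ⟨p, hp⟩ := exists_polynomial_near_zero_one_valued (h₀.union h₁) hK hu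
    (fun z _ => indicator_eq_zero_or_self _ _ z) hε
  exact ⟨p, fun z hz => by simpa [hu₀ z hz] using hp z (.inl hz),
    fun z hz => by simpa [hu₁ z hz] using hp z (.inr hz)⟩

theorem inter_polynomialHull_union_subset [Finite σ] (h₀ : IsCompact K₀) (h₁ : IsCompact K₁)
    (hd : Disjoint K₀ K₁) (hK : polynomialHull (K₀ ∪ K₁) ⊆ K₀ ∪ K₁) (hK' : K' ⊆ K₁) :
    K₁ ∩ polynomialHull (K₀ ∪ K') ⊆ polynomialHull K' := by
  rintro z ⟨hz₁, hz⟩ p C hC hp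
  obtain ⟨M, hM⟩ := h₀.exists_bound_of_continuousOn (continuous_eval p).continuousOn
  set D := |M| + C + ‖eval z p‖ + 1
  have hD : 0 < D := by positivity
  refine le_of_forall_pos_le_add fun η hη => ?_
  obtain ⟨e, he₀, he₁⟩ := exists_polynomial_near_indicator h₀ h₁ hd hK (div_pos hη hD)
  set ε := η / D
  have hε : 0 < ε := div_pos hη hD
  have hbound : ‖eval z (e * p)‖ ≤ (1 + ε) * C + ε * |M| := by
    refine hz _ _ (by positivity) ?_
    rintro w (hw | hw) <;> rw [map_mul, norm_mul]
    · have h := mul_le_mul (he₀ w hw).le ((hM w hw).trans (le_abs_self M)) (norm_nonneg _) hε.le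
      exact h.trans (le_add_of_nonneg_left (by positivity))
    · have he : ‖eval w e‖ ≤ 1 + ε := by
        linarith [norm_le_norm_add_norm_sub' (eval w e) 1, he₁ w (hK' hw), norm_one (α := ℂ)]
      have h := mul_le_mul he (hp w hw) (norm_nonneg _) (by positivity)
      exact h.trans (le_add_of_nonneg_right (by positivity))
  have hlower : (1 - ε) * ‖eval z p‖ ≤ ‖eval z (e * p)‖ := by
    rw [map_mul, norm_mul]
    gcongr
    linarith [norm_le_norm_add_norm_sub (eval z e) 1, he₁ z hz₁, norm_one (α := ℂ)]
  have hεD : ε * D = η := div_mul_cancel₀ η hD.ne'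
  linarith [show ε * D = ε * |M| + ε * C + ε * ‖eval z p‖ + ε by ring]

theorem polynomialHull_union_subset [Finite σ] (h₀ : IsCompact K₀) (h₁ : IsCompact K₁)
    (hd : Disjoint K₀ K₁) (hK : polynomialHull (K₀ ∪ K₁) ⊆ K₀ ∪ K₁) (hK' : K' ⊆ K₁)
    (hK'₁ : K₁ ∩ polynomialHull K' ⊆ K') : polynomialHull (K₀ ∪ K') ⊆ K₀ ∪ K' := by
  intro z hz
  refine (hK (polynomialHull_mono (union_subset_union_right _ hK') hz)).imp_right fun hz₁ => ?_
  exact hK'₁ ⟨hz₁, inter_polynomialHull_union_subset h₀ h₁ hd hK hK' ⟨hz₁, hz⟩⟩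

end PolynomialHulls

section Products

variable {N n : ℕ} {K : Set (EuclideanSpace ℂ (Fin N) × EuclideanSpace ℂ (Fin n))}

/-- The coordinates of a point of `ℂᴺ × ℂⁿ`. -/
def sumCoord : (EuclideanSpace ℂ (Fin N) × EuclideanSpace ℂ (Fin n)) ≃L[ℂ] (Fin N ⊕ Fin n → ℂ) :=
  ((EuclideanSpace.equiv (Fin N) ℂ).prodCongr (EuclideanSpace.equiv (Fin n) ℂ)).trans
    (ContinuousLinearEquiv.sumPiEquivProdPi ℂ (Fin N) (Fin n) fun _ => ℂ).symm

theorem sumCoord_apply (z : EuclideanSpace ℂ (Fin N) × EuclideanSpace ℂ (Fin n)) :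
    sumCoord z = Sum.elim (fun i => z.1 i) fun j => z.2 j := by
  ext (i | j) <;> rfl

theorem mem_polyHull2_iff (hK : IsCompact K)
    {z : EuclideanSpace ℂ (Fin N) × EuclideanSpace ℂ (Fin n)} :
    z ∈ polyHull2 K ↔ sumCoord z ∈ polynomialHull (sumCoord '' K) := by
  simp only [polyHull2, polynomialHull, Set.mem_ofPred_eq, ← sumCoord_apply, forall_mem_image]
  refine ⟨fun hz p C hC hp => (hz p).trans (Real.sSup_le (forall_mem_image.2 fun _ hw => hp hw) hC),
    fun hz p => hz p _ (Real.sSup_nonneg (forall_mem_image.2 fun _ _ => norm_nonneg _))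
      fun w hw => le_csSup (hK.image ?_).bddAbove (mem_image_of_mem _ hw)⟩
  exact ((continuous_eval p).comp sumCoord.continuous).norm

theorem isPolyConvex2_iff (hK : IsCompact K) :
    IsPolyConvex2 K ↔ polynomialHull (sumCoord '' K) ⊆ sumCoord '' K := by
  have hsub : K ⊆ polyHull2 K := fun z hz =>
    (mem_polyHull2_iff hK).2 (subset_polynomialHull (mem_image_of_mem _ hz))
  refine ⟨fun h => ?_, fun h => Subset.antisymm (fun z hz => ?_) hsub⟩
  · rw [← sumCoord.surjective.image_preimage (polynomialHull _)]
    refine image_mono fun z hz => ?_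
    rwa [← show polyHull2 K = K from h, mem_polyHull2_iff hK]
  · exact sumCoord.injective.mem_set_image.1 (h ((mem_polyHull2_iff hK).1 hz))

theorem IsPolyConvex2.image (h : IsPolyConvex2 K) (hK : IsCompact K)
    (T : (EuclideanSpace ℂ (Fin N) × EuclideanSpace ℂ (Fin n)) ≃L[ℂ]
      (EuclideanSpace ℂ (Fin N) × EuclideanSpace ℂ (Fin n))) : IsPolyConvex2 (T '' K) := by
  let T' := (sumCoord.symm.trans (T.trans sumCoord)).toLinearEquiv
  have hT : sumCoord '' (T '' K) = T' '' (sumCoord '' K) := by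
    simp [T', image_image]
  rw [isPolyConvex2_iff (hK.image T.continuous), hT, polynomialHull_image]
  exact image_mono ((isPolyConvex2_iff hK).1 h)

theorem exists_polynomial_eval_eq_inner_snd (ζ : EuclideanSpace ℂ (Fin n)) :
    ∃ p : MvPolynomial (Fin N ⊕ Fin n) ℂ, ∀ z, eval (sumCoord z) p = inner ℂ ζ z.2 := by
  refine ⟨∑ j, C (starRingEnd ℂ (ζ j)) * X (.inr j), fun z => ?_⟩
  simp [sumCoord_apply, PiLp.inner_apply, mul_comm]

theorem norm_snd_le_of_mem_polynomialHull
    {z : EuclideanSpace ℂ (Fin N) × EuclideanSpace ℂ (Fin n)} {r : ℝ} (hr : 0 ≤ r)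
    (hK : ∀ w ∈ K, ‖w.2‖ ≤ r) (hz : sumCoord z ∈ polynomialHull (sumCoord '' K)) : ‖z.2‖ ≤ r := by
  obtain ⟨p, hp⟩ := exists_polynomial_eval_eq_inner_snd (N := N) z.2
  have h : ‖inner ℂ z.2 z.2‖ ≤ ‖z.2‖ * r := by
    rw [← hp]
    refine hz p _ (by positivity) (forall_mem_image.2 fun w hw => ?_)
    rw [hp]
    exact (norm_inner_le_norm _ _).trans (by gcongr; exact hK w hw)
  rw [← inner_self_re_eq_norm, inner_self_eq_norm_mul_norm] at h
  rcases (norm_nonneg z.2).eq_or_lt with h₀ | h₀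
  · exact h₀ ▸ hr
  · exact le_of_mul_le_mul_left h h₀

theorem IsPolyConvex2.union_prod_closedBall_mono {L : Set (EuclideanSpace ℂ (Fin N))} {r R : ℝ}
    (hL : IsCompact L) (hK : IsCompact K) (hr : 0 ≤ r) (hrR : r ≤ R)
    (hd : Disjoint K (L ×ˢ closedBall 0 R)) (h : IsPolyConvex2 (K ∪ L ×ˢ closedBall 0 R)) :
    IsPolyConvex2 (K ∪ L ×ˢ closedBall 0 r) := by
  have hball (s : ℝ) : IsCompact (L ×ˢ closedBall (0 : EuclideanSpace ℂ (Fin n)) s) :=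
    hL.prod (isCompact_closedBall 0 s)
  rw [isPolyConvex2_iff (hK.union (hball _)), image_union] at h ⊢
  refine polynomialHull_union_subset (hK.image sumCoord.continuous)
    ((hball R).image sumCoord.continuous) ((disjoint_image_iff sumCoord.injective).2 hd) h
    (image_mono (prod_mono_right (closedBall_subset_closedBall hrR))) ?_
  rintro _ ⟨⟨z, hz, rfl⟩, hzr⟩
  exact mem_image_of_mem _ ⟨hz.1, mem_closedBall_zero_iff.2 <|
    norm_snd_le_of_mem_polynomialHull hr (fun w hw => mem_closedBall_zero_iff.1 hw.2) hzr⟩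

theorem image_smul_snd_prod_closedBall {X E : Type*} [NormedAddCommGroup E] [NormedSpace ℂ E]
    (L : Set X) (r : ℝ) {t : ℂ} (ht : t ≠ 0) :
    (fun p : X × E => (p.1, t • p.2)) '' (L ×ˢ closedBall 0 r) = L ×ˢ closedBall 0 (‖t‖ * r) := by
  have hball : (fun x : E => t • x) '' closedBall 0 r = closedBall 0 (‖t‖ * r) := by
    rw [image_smul, smul_closedBall' ht, smul_zero]
  rw [← hball, ← image_id L, ← prodMap_image_prod, image_id]
  rfl

theorem IsPolyConvex2.image_smul_snd (h : IsPolyConvex2 K) (hK : IsCompact K) {t : ℂ}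
    (ht : t ≠ 0) : IsPolyConvex2 ((fun p => (p.1, t • p.2)) '' K) :=
  h.image hK ((ContinuousLinearEquiv.refl ℂ _).prodCongr
    (ContinuousLinearEquiv.smulLeft (Units.mk0 t ht)))

end Products

theorem stmt_8_general {N n : ℕ} {L : Set (EuclideanSpace ℂ (Fin N))} {r : ℝ} (hr : 0 ≤ r)
    {S : Set (EuclideanSpace ℂ (Fin N) × EuclideanSpace ℂ (Fin n))}
    (hL : IsCompact L) (hS : IsCompact S) (hpc : IsPolyConvex2 (L ×ˢ closedBall 0 r ∪ S))
    (hdisj : Disjoint S (L ×ˢ closedBall 0 r)) {t : ℂ} (ht : 1 ≤ ‖t‖) :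
    IsPolyConvex2 (L ×ˢ closedBall 0 r ∪ (fun p => (p.1, t • p.2)) '' S) ∧
      Disjoint ((fun p => (p.1, t • p.2)) '' S) (L ×ˢ closedBall 0 r) := by
  have ht₀ : t ≠ 0 := norm_pos_iff.1 (one_pos.trans_le ht)
  have hrt : r ≤ ‖t‖ * r := le_mul_of_one_le_left hr ht
  have hinj : Function.Injective fun p : EuclideanSpace ℂ (Fin N) × EuclideanSpace ℂ (Fin n) =>
      (p.1, t • p.2) := Function.injective_id.prodMap (smul_right_injective _ ht₀)
  have hθ := hpc.image_smul_snd ((hL.prod (isCompact_closedBall 0 r)).union hS) ht₀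
  have hθd := (disjoint_image_iff hinj).2 hdisj
  rw [image_union, image_smul_snd_prod_closedBall L r ht₀, union_comm] at hθ
  rw [image_smul_snd_prod_closedBall L r ht₀] at hθd
  rw [union_comm]
  exact ⟨hθ.union_prod_closedBall_mono hL (hS.image (by fun_prop)) hr hrt hθd,
    hθd.mono_right (prod_mono_right (closedBall_subset_closedBall hrt))⟩

/-- Let `L ⊆ ℂᴺ` be compact, `B ⊆ ℂⁿ` a closed ball centred at `0`, and `S ⊆ ℂ^{N+n}` compact
with `(L × B) ∪ S` polynomially convex and `S ∩ (L × B) = ∅`. Then for every `t ∈ [1, ∞)`, with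
`θ_t(z,ζ) = (z, tζ)`, the set `(L × B) ∪ θ_t(S)` is polynomially convex and
`θ_t(S) ∩ (L × B) = ∅`, provided `S ∩ (L × tB) = ∅`. -/
theorem stmt_8 (N n : ℕ) (L : Set (EuclideanSpace ℂ (Fin N))) (r : ℝ) (hr : 0 < r)
    (S : Set (EuclideanSpace ℂ (Fin N) × EuclideanSpace ℂ (Fin n)))
    (hLc : IsCompact L) (hSc : IsCompact S)
    (hpc : IsPolyConvex2 ((L ×ˢ closedBall (0 : EuclideanSpace ℂ (Fin n)) r) ∪ S))
    (hdisj : S ∩ (L ×ˢ closedBall (0 : EuclideanSpace ℂ (Fin n)) r) = ∅)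
    (t : ℝ) (ht : 1 ≤ t)
    (hdisj' : S ∩ (L ×ˢ closedBall (0 : EuclideanSpace ℂ (Fin n)) (t * r)) = ∅) :
    IsPolyConvex2 ((L ×ˢ closedBall (0 : EuclideanSpace ℂ (Fin n)) r) ∪
        ((fun p : EuclideanSpace ℂ (Fin N) × EuclideanSpace ℂ (Fin n) =>
          (p.1, (t : ℂ) • p.2)) '' S)) ∧
      ((fun p : EuclideanSpace ℂ (Fin N) × EuclideanSpace ℂ (Fin n) =>
          (p.1, (t : ℂ) • p.2)) '' S) ∩
        (L ×ˢ closedBall (0 : EuclideanSpace ℂ (Fin n)) r) = ∅ := by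
  rw [← Set.disjoint_iff_inter_eq_empty] at hdisj ⊢
  exact stmt_8_general hr.le hLc hSc hpc hdisj (by rwa [Complex.norm_of_nonneg (by linarith)])
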